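/- Let G be a cubic graph and P* a valid factor of G minimizing the number of components and, subject to that, the number of odd cycles. Then the number of odd path components of P* is at least three times the number of odd cycle components of P*. -/

import Mathlib

open SimpleGraph

/-- A cubic graph: every vertex has degree 3. -/
def IsCubic {V : Type*} [Fintype V] (G : SimpleGraph V) : Prop :=
  ∀ v : V, Nat.card (G.neighborSet v) = 3

/-- A circular nowhere-zero `r`-flow: an orientation `dir` of `G` together with
a flow value `f` on each directed edge, with values in `[1, r-1]` and flow
conservation at every vertex. -/
structure CNZF {V : Type*} [Fintype V] (G : SimpleGraph V) (r : ℝ) where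
  dir : V → V → Bool
  f : V → V → ℝ
  orients : ∀ u v, G.Adj u v ↔ (dir u v = true ∨ dir v u = true)
  asymm : ∀ u v, dir u v = true → dir v u = false
  lb : ∀ u v, dir u v = true → 1 ≤ f u v
  ub : ∀ u v, dir u v = true → f u v ≤ r - 1
  conserv : ∀ v : V, (∑ u : V, if dir v u = true then f v u else 0)
      = ∑ u : V, if dir u v = true then f u v else 0

/-- Out-degree of a vertex in an orientation. -/
noncomputable def outDeg {V : Type*} (dir : V → V → Bool) (v : V) : ℕ :=
  Nat.card {u | dir v u = true}

/-- Every connected component of the subgraph induced by `S` is a tree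
on at most `m` vertices. -/
def MonoOK {V : Type*} (G : SimpleGraph V) (m : ℕ) (S : Set V) : Prop :=
  (G.induce S).IsAcyclic ∧
    ∀ c : (G.induce S).ConnectedComponent, Nat.card c.supp ≤ m

/-- A `k`-weak bisection, given by its first part `S`. -/
def IsWeakBisection {V : Type*} [Fintype V] (G : SimpleGraph V) (k : ℕ) (S : Set V) : Prop :=
  Nat.card S = Nat.card (Sᶜ : Set V) ∧ MonoOK G (k-2) S ∧ MonoOK G (k-2) (Sᶜ : Set V)

/-- Every monochromatic component of the 2-coloring `c` has at most `m` vertices. -/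
def MonoAtMost {V : Type*} (G : SimpleGraph V) (c : V → Bool) (m : ℕ) : Prop :=
  ∀ b : Bool, ∀ comp : (G.induce {v | c v = b}).ConnectedComponent,
    Nat.card comp.supp ≤ m

/-- Edges of `L_k` (on vertex labels `0, …, 5+2k`): `L_0` is `K_{3,3}` minus an
edge (parts `{0,1,4}` and `{2,3,5}`, edge `45` removed, degree-2 vertices `4,5`);
at step `j` the two new adjacent vertices `4+2j, 5+2j` are attached to the
previous degree-2 vertices `2+2j, 3+2j`. The degree-2 vertices of `L_k` are
`4+2k` and `5+2k`. -/
def LEdge (k : ℕ) (a b : ℕ) : Prop :=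
  (a, b) ∈ ({(0,2),(0,3),(0,5),(1,2),(1,3),(1,5),(4,2),(4,3)} : Set (ℕ × ℕ)) ∨
  ∃ j, 1 ≤ j ∧ j ≤ k ∧
    ((a, b) = (4+2*j, 5+2*j) ∨ (a, b) = (2+2*j, 4+2*j) ∨ (a, b) = (3+2*j, 5+2*j))

/-- The graph `L_k`. -/
def Lgraph (k : ℕ) : SimpleGraph (Fin (6+2*k)) :=
  SimpleGraph.fromRel (fun a b => LEdge k a.val b.val)

/-- Edges of `T_k`: one copy of `L'_k` (the copy of `L_k` on `0..5+2k` with apex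
`6+2k`), two copies of `L'_0` (on `7+2k..12+2k` with apex `13+2k`, and on
`14+2k..19+2k` with apex `20+2k`), and a central vertex `21+2k` adjacent to the
three apexes. -/
def TEdge (k : ℕ) (a b : ℕ) : Prop :=
  LEdge k a b
  ∨ (a = 6+2*k ∧ (b = 4+2*k ∨ b = 5+2*k))
  ∨ (∃ a' b', LEdge 0 a' b' ∧ a = 7+2*k+a' ∧ b = 7+2*k+b')
  ∨ (a = 13+2*k ∧ (b = 11+2*k ∨ b = 12+2*k))
  ∨ (∃ a' b', LEdge 0 a' b' ∧ a = 14+2*k+a' ∧ b = 14+2*k+b')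
  ∨ (a = 20+2*k ∧ (b = 18+2*k ∨ b = 19+2*k))
  ∨ (a = 21+2*k ∧ (b = 6+2*k ∨ b = 13+2*k ∨ b = 20+2*k))

/-- The cubic graph `T_k`. -/
def Tgraph (k : ℕ) : SimpleGraph (Fin (22+2*k)) :=
  SimpleGraph.fromRel (fun a b => TEdge k a.val b.val)

/-- A valid factor of `G`: a spanning subgraph all of whose components are paths
or cycles (equivalently, all degrees are 1 or 2), such that the two endpoints
(degree-1 vertices) of every odd component are non-adjacent in `G`; in particular
no component is an isolated vertex. -/
def IsValidFactor {V : Type*} (G H : SimpleGraph V) : Prop :=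
  H ≤ G ∧
  (∀ v : V, 1 ≤ Nat.card (H.neighborSet v) ∧ Nat.card (H.neighborSet v) ≤ 2) ∧
  ∀ c : H.ConnectedComponent, Odd (Nat.card c.supp) →
    ∀ u v : V, u ∈ c.supp → v ∈ c.supp → u ≠ v →
      Nat.card (H.neighborSet u) = 1 → Nat.card (H.neighborSet v) = 1 → ¬ G.Adj u v

/-- A component of `H` is a cycle iff all its vertices have degree 2 in `H`. -/
def IsCycleComp {V : Type*} (H : SimpleGraph V) (c : H.ConnectedComponent) : Prop :=
  ∀ v ∈ c.supp, Nat.card (H.neighborSet v) = 2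

/-- An odd cycle component. -/
def OddCycleComp {V : Type*} (H : SimpleGraph V) (c : H.ConnectedComponent) : Prop :=
  Odd (Nat.card c.supp) ∧ IsCycleComp H c

/-- An odd path component (a component with an odd number of vertices containing
a degree-1 vertex). -/
def OddPathComp {V : Type*} (H : SimpleGraph V) (c : H.ConnectedComponent) : Prop :=
  Odd (Nat.card c.supp) ∧ ∃ v ∈ c.supp, Nat.card (H.neighborSet v) = 1

noncomputable def numComponents {V : Type*} (H : SimpleGraph V) : ℕ := Nat.card H.ConnectedComponent

noncomputable def numOddCycles {V : Type*} (H : SimpleGraph V) : ℕ :=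
  Nat.card {c : H.ConnectedComponent // OddCycleComp H c}

/-- `H` is a valid factor of `G` with the minimum number of components. -/
def MinimizesComponents {V : Type*} (G H : SimpleGraph V) : Prop :=
  IsValidFactor G H ∧ ∀ H' : SimpleGraph V, IsValidFactor G H' →
    numComponents H ≤ numComponents H'

/-- `H` is a valid factor of `G` minimizing the number of components and,
subject to that, the number of odd cycles. -/
def IsMinValidFactor {V : Type*} (G H : SimpleGraph V) : Prop :=
  MinimizesComponents G H ∧
  ∀ H' : SimpleGraph V, IsValidFactor G H' →
    numComponents H' = numComponents H → numOddCycles H ≤ numOddCycles H'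

/-- An external vertex of a factor: an endpoint of a path component, or a vertex
of an odd cycle component. -/
def ExternalVtx {V : Type*} (H : SimpleGraph V) (v : V) : Prop :=
  Nat.card (H.neighborSet v) = 1 ∨ OddCycleComp H (H.connectedComponentMk v)


namespace VF

structure Piece (V : Type*) where
  l : List V
  cl : Bool

def POK {V : Type*} (G : SimpleGraph V) (q : Piece V) : Prop :=
  q.l.IsChain G.Adj ∧ 2 ≤ q.l.length ∧
  (q.cl = true → 3 ≤ q.l.length ∧ ∀ a ∈ q.l.head?, ∀ b ∈ q.l.getLast?, G.Adj b a) ∧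
  (q.cl = false → Odd q.l.length → ∀ a ∈ q.l.head?, ∀ b ∈ q.l.getLast?, ¬ G.Adj a b)

def flat {V : Type*} (D : List (Piece V)) : List V := D.flatMap Piece.l

def Good {V : Type*} (G : SimpleGraph V) (D : List (Piece V)) : Prop :=
  (flat D).Nodup ∧ (∀ v, v ∈ flat D) ∧ ∀ q ∈ D, POK G q

def isOC {V : Type*} (q : Piece V) : Bool := q.cl && decide (q.l.length % 2 = 1)
def isOP {V : Type*} (q : Piece V) : Bool := !q.cl && decide (q.l.length % 2 = 1)

def MinD {V : Type*} (G : SimpleGraph V) (D : List (Piece V)) : Prop :=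
  Good G D ∧ ∀ D', Good G D' → D.length ≤ D'.length ∧
    (D'.length = D.length → D.countP isOC ≤ D'.countP isOC)

variable {V : Type*} {G : SimpleGraph V} {D : List (Piece V)}

theorem flat_append (A B : List (Piece V)) : flat (A ++ B) = flat A ++ flat B := by
  simp [flat]

theorem replace (hD : MinD G D) {rem R N : List (Piece V)} (h : D.Perm (rem ++ R))
    (hN : (flat N).Perm (flat rem)) (hok : ∀ q ∈ N, POK G q) :
    rem.length ≤ N.length ∧ (N.length = rem.length → rem.countP isOC ≤ N.countP isOC) := by
  obtain ⟨⟨h1, h2, h3⟩, h4⟩ := hD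
  have hp : (flat D).Perm (flat (N ++ R)) := by
    have : (flat D).Perm (flat (rem ++ R)) := h.flatMap_right _
    rw [flat_append] at *
    exact this.trans (hN.symm.append_right _)
  have hg : Good G (N ++ R) := by
    refine ⟨hp.nodup_iff.1 h1, fun v => hp.mem_iff.1 (h2 v), ?_⟩
    intro q hq
    rcases List.mem_append.1 hq with hq | hq
    · exact hok q hq
    · exact h3 q (h.mem_iff.2 (List.mem_append_right _ hq))
  have := h4 _ hg
  have e1 := h.length_eq
  have e2 := h.countP_eq isOC
  simp only [List.length_append, List.countP_append] at *
  refine ⟨by omega, fun h => ?_⟩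
  have := this.2 (by omega)
  omega

theorem close_up {l : List V} (hc : l.IsChain G.Adj) (hl : 2 ≤ l.length) :
    ∃ b, POK G ⟨l, b⟩ := by
  by_cases h : Odd l.length ∧ ∃ a ∈ l.head?, ∃ b ∈ l.getLast?, G.Adj a b
  · refine ⟨true, hc, hl, fun _ => ⟨?_, ?_⟩, by simp⟩
    · obtain ⟨⟨k, hk⟩, _⟩ := h
      simp only; omega
    · obtain ⟨_, a, ha, b, hb, hab⟩ := h
      intro a' ha' b' hb'
      simp only [Option.mem_def] at *
      rw [ha] at ha'; rw [hb] at hb'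
      cases ha'; cases hb'; exact hab.symm
  · refine ⟨false, hc, hl, by simp, ?_⟩
    intro _ ho a ha b hb hab
    exact h ⟨ho, a, ha, b, hb, hab⟩

theorem split_one {c : Piece V} (hc : c ∈ D) : ∃ R, D.Perm ([c] ++ R) := by
  classical
  exact ⟨_, List.perm_cons_erase hc⟩

theorem split_two {c p : Piece V} (hc : c ∈ D) (hp : p ∈ D) (h : p ≠ c) :
    ∃ R, D.Perm ([c, p] ++ R) := by
  classical
  have h1 := List.perm_cons_erase hc
  have h2 : p ∈ D.erase c := (List.mem_erase_of_ne h).2 hp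
  exact ⟨_, h1.trans ((List.perm_cons_erase h2).cons c)⟩

/-- `y` may serve as an endpoint of a path spanning the piece. -/
def EndOf (G : SimpleGraph V) (q : Piece V) (y : V) : Prop :=
  ∃ m, (y :: m).Perm q.l ∧ (y :: m).IsChain G.Adj

/-- cyclic arrangement. -/
def Cyc (G : SimpleGraph V) (q : Piece V) (l : List V) : Prop :=
  l.Perm q.l ∧ l.IsChain G.Adj ∧ ∀ a ∈ l.head?, ∀ b ∈ l.getLast?, G.Adj b a

theorem cyc_rot {q : Piece V} {s t : List V} (h : Cyc G q (s ++ t)) : Cyc G q (t ++ s) := by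
  obtain ⟨h1, h2, h3⟩ := h
  refine ⟨List.perm_append_comm.trans h1, ?_, ?_⟩
  · rw [List.isChain_append] at *
    refine ⟨h2.2.1, h2.1, ?_⟩
    intro x hx y hy
    apply h3 y _ x
    · simp_all [List.getLast?_append]
    · simp_all [List.head?_append]
  · rw [List.isChain_append] at *
    intro a ha b hb
    rcases s with _ | ⟨x, s⟩
    · simp at *; exact h3 a ha b hb
    · rcases t with _ | ⟨y, t⟩
      · simp only [List.nil_append, List.append_nil] at *; exact h3 a ha b hb
      · apply h2.2.2 b _ a
        · simpa using ha
        · rw [List.getLast?_append_of_ne_nil _ (by simp)] at hb; exact hb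

theorem cyc_of {c : Piece V} (h : POK G c) (hcl : c.cl = true) : Cyc G c c.l :=
  ⟨List.Perm.refl _, h.1, (h.2.2.1 hcl).2⟩

theorem cyc_head {c : Piece V} (h : POK G c) (hcl : c.cl = true) {x : V} (hx : x ∈ c.l) :
    ∃ m, Cyc G c (x :: m) := by
  obtain ⟨s, t, e⟩ := List.append_of_mem hx
  have := cyc_of h hcl
  rw [e] at this
  exact ⟨_, cyc_rot this⟩

theorem end_cyc {c : Piece V} (h : POK G c) (hcl : c.cl = true) {x : V} (hx : x ∈ c.l) :
    EndOf G c x := by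
  obtain ⟨m, h1, h2, _⟩ := cyc_head h hcl hx
  exact ⟨m, h1, h2⟩

theorem no_merge (hD : MinD G D) {c p : Piece V} (hc : c ∈ D) (hp : p ∈ D) (hne : p ≠ c)
    {x y : V} (hx : EndOf G c x) (hy : EndOf G p y) : ¬ G.Adj x y := by
  intro hxy
  obtain ⟨R, hR⟩ := split_two hc hp hne
  obtain ⟨m, hm, hm'⟩ := hx
  obtain ⟨n, hn, hn'⟩ := hy
  have hch : ((x :: m).reverse ++ (y :: n)).IsChain G.Adj := by
    rw [List.isChain_append]
    refine ⟨?_, hn', ?_⟩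
    · rw [List.isChain_reverse]
      exact hm'.imp (fun _ _ h => h.symm)
    · simp [hxy]
  obtain ⟨b, hb⟩ := close_up hch (by simp; omega)
  have := replace hD hR (N := [⟨(x :: m).reverse ++ (y :: n), b⟩])
    (by
      simp only [flat, List.flatMap_cons, List.flatMap_nil, List.append_nil]
      exact ((List.reverse_perm _).trans hm).append hn) (by simpa using hb)
  simp at this

theorem key_split (hD : MinD G D) {c p : Piece V} (hc : c ∈ D) (hp : p ∈ D) (hne : p ≠ c)
    (hcl : c.cl = true) (hodd : c.l.length % 2 = 1) {x y : V} (hx : x ∈ c.l)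
    (hxy : G.Adj x y) {s t : List V} (hst : (s ++ y :: t).Perm p.l)
    (hch : (s ++ y :: t).IsChain G.Adj) (hpc : p.cl = false) :
    s.length % 2 = 1 ∧ (s.length = 1 ∨ ∀ a ∈ s.head?, ∀ b ∈ s.getLast?, G.Adj a b) := by
  have hcok := hD.1.2.2 c hc
  by_contra hcon
  have hrev : ((s ++ y :: t).reverse).Perm p.l := (List.reverse_perm _).trans hst
  have hrch : ((s ++ y :: t).reverse).IsChain G.Adj := by
    rw [List.isChain_reverse]; exact hch.imp (fun _ _ h => h.symm)
  -- s nonempty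
  have hs : s ≠ [] := by
    rintro rfl
    exact no_merge hD hc hp hne (end_cyc hcok hcl hx) ⟨t, hst, hch⟩ hxy
  have ht : t ≠ [] := by
    rintro rfl
    refine no_merge hD hc hp hne (end_cyc hcok hcl hx) ⟨s.reverse, ?_, ?_⟩ hxy
    · simpa using hrev
    · simpa using hrch
  obtain ⟨m, h1, h2, h3⟩ := cyc_head hcok hcl hx
  obtain ⟨R, hR⟩ := split_two hc hp hne
  rw [List.isChain_append] at hch
  have hok1 : POK G ⟨s, false⟩ := by
    refine ⟨hch.1, ?_, by simp, ?_⟩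
    · by_contra h
      have : s.length ≠ 0 := by simpa using hs
      simp only at h
      exact hcon ⟨by omega, Or.inl (by omega)⟩
    · intro _ ho a ha b hb hab
      refine hcon ⟨Nat.odd_iff.1 ho, Or.inr ?_⟩
      intro a' ha' b' hb'
      simp only [Option.mem_def] at *
      rw [ha] at ha'; rw [hb] at hb'
      cases ha'; cases hb'; exact hab
  have hok2 : POK G ⟨(x :: m).reverse ++ y :: t, false⟩ := by
    refine ⟨?_, by simp; omega, by simp, ?_⟩
    · rw [List.isChain_append]
      refine ⟨?_, hch.2.1, by simp [hxy]⟩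
      rw [List.isChain_reverse]; exact h2.imp (fun _ _ h => h.symm)
    · intro _ _ a ha b hb
      have hac : a ∈ c.l := by
        apply h1.mem_iff.1
        have : a ∈ (x :: m).reverse := by
          simp only [List.head?_append_of_ne_nil _ (by simp : (x :: m).reverse ≠ [])] at ha
          exact List.mem_of_mem_head? ha
        exact List.mem_reverse.1 this
      refine no_merge hD hc hp hne (end_cyc hcok hcl hac) ?_
      have hb' : b ∈ (s ++ y :: t).reverse.head? := by
        rw [List.head?_reverse]
        simp only [List.getLast?_append_of_ne_nil _ (by simp : (y :: t) ≠ [])] at hb ⊢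
        exact hb
      obtain ⟨r, hr⟩ : ∃ r, (s ++ y :: t).reverse = b :: r := by
        rcases hh : (s ++ y :: t).reverse with _ | ⟨b', r⟩
        · simp at hh
        · rw [hh] at hb'; simp at hb'; exact ⟨r, by rw [hb']⟩
      rw [hr] at hrev hrch
      exact ⟨r, hrev, hrch⟩
  have := (replace hD hR (N := [⟨s, false⟩, ⟨(x :: m).reverse ++ y :: t, false⟩])
    (by
      simp only [flat, List.flatMap_cons, List.flatMap_nil, List.append_nil]
      have a1 : ((x :: m).reverse ++ y :: t).Perm (c.l ++ y :: t) :=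
        ((List.reverse_perm _).trans h1).append_right _
      refine (a1.append_left s).trans ?_
      rw [← List.append_assoc]
      refine (List.perm_append_comm.append_right _).trans ?_
      rw [List.append_assoc]
      exact hst.append_left _) (by
      intro q hq
      simp only [List.mem_cons, List.not_mem_nil, or_false] at hq
      rcases hq with rfl | rfl
      exacts [hok1, hok2])).2 (by simp)
  simp [isOC, hcl, hodd, hpc] at this


theorem piece_nodup (hD : Good G D) {c : Piece V} (hc : c ∈ D) : c.l.Nodup := by
  obtain ⟨R, hR⟩ := split_one hc
  have h : (flat D).Perm (flat ([c] ++ R)) := hR.flatMap_right _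
  have := h.nodup_iff.1 hD.1
  rw [flat_append, List.nodup_append] at this
  simpa [flat] using this.1

theorem piece_disj (hD : Good G D) {c p : Piece V} (hc : c ∈ D) (hp : p ∈ D) (hne : p ≠ c)
    {v : V} (hv : v ∈ c.l) : v ∉ p.l := by
  obtain ⟨R, hR⟩ := split_two hc hp hne
  have h : (flat D).Perm (flat ([c, p] ++ R)) := hR.flatMap_right _
  have := h.nodup_iff.1 hD.1
  rw [flat_append, List.nodup_append] at this
  have := this.1
  simp only [flat, List.flatMap_cons, List.flatMap_nil, List.append_nil] at this
  rw [List.nodup_append] at this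
  intro hv'
  exact this.2.2 v hv v hv' rfl

theorem reverse_chain {l : List V} (h : l.IsChain G.Adj) : l.reverse.IsChain G.Adj := by
  rw [List.isChain_reverse]; exact h.imp (fun _ _ h => h.symm)

theorem key_full (hD : MinD G D) {c p : Piece V} (hc : c ∈ D) (hp : p ∈ D)
    (hcl : c.cl = true) (hodd : c.l.length % 2 = 1) {x y : V} (hx : x ∈ c.l)
    (hxy : G.Adj x y) (hyc : y ∉ c.l) {s t : List V} (hst : s ++ y :: t = p.l) :
    p ≠ c ∧ p.cl = false ∧ (s.length % 2 = 1 ∧ t.length % 2 = 1) ∧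
    (s.length = 1 ∨ ∀ a ∈ s.head?, ∀ b ∈ s.getLast?, G.Adj a b) ∧
    (t.length = 1 ∨ ∀ a ∈ t.head?, ∀ b ∈ t.getLast?, G.Adj a b) := by
  have hyp : y ∈ p.l := by rw [← hst]; simp
  have hne : p ≠ c := by rintro rfl; exact hyc hyp
  have hpo : p.cl = false := by
    by_contra h
    simp only [Bool.not_eq_false] at h
    exact no_merge hD hc hp hne (end_cyc (hD.1.2.2 c hc) hcl hx)
      (end_cyc (hD.1.2.2 p hp) h hyp) hxy
  have hch : (s ++ y :: t).IsChain G.Adj := by rw [hst]; exact (hD.1.2.2 p hp).1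
  have h1 := key_split hD hc hp hne hcl hodd hx hxy (by rw [hst]) hch hpo
  have h2 := key_split hD hc hp hne hcl hodd hx hxy (s := t.reverse) (t := s.reverse)
    (by
      have : t.reverse ++ y :: s.reverse = (s ++ y :: t).reverse := by simp
      rw [this, hst]; exact List.reverse_perm _)
    (by
      have : t.reverse ++ y :: s.reverse = (s ++ y :: t).reverse := by simp
      rw [this]; exact reverse_chain hch) hpo
  simp only [List.length_reverse, List.head?_reverse, List.getLast?_reverse] at h2
  refine ⟨hne, hpo, ⟨h1.1, h2.1⟩, h1.2, h2.2.imp id ?_⟩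
  intro h a ha b hb
  exact (h b hb a ha).symm

theorem two_attach (hD : MinD G D) {c c' p : Piece V} (hc : c ∈ D) (hc' : c' ∈ D) (hp : p ∈ D)
    (hcl : c.cl = true) (hodd : c.l.length % 2 = 1) {x y : V} (hx : x ∈ c.l)
    (hxy : G.Adj x y) (hyc : y ∉ c.l)
    (hcl' : c'.cl = true) (hodd' : c'.l.length % 2 = 1) {x' y' : V} (hx' : x' ∈ c'.l)
    (hxy' : G.Adj x' y') (hyc' : y' ∉ c'.l) {s m t : List V}
    (hst : s ++ y :: (m ++ y' :: t) = p.l) : False := by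
  obtain ⟨hne, hpo, ⟨l1, l2⟩, e1, e2⟩ := key_full hD hc hp hcl hodd hx hxy hyc hst
  obtain ⟨-, -, ⟨l1', l2'⟩, e1', e2'⟩ :=
    key_full hD hc' hp hcl' hodd' hx' hxy' hyc' (s := s ++ y :: m) (t := t) (by simpa using hst)
  have hch : (s ++ y :: (m ++ y' :: t)).IsChain G.Adj := by rw [hst]; exact (hD.1.2.2 p hp).1
  simp only [List.length_append, List.length_cons] at *
  have hm : m ≠ [] := by rintro rfl; simp at *; omega
  have hs : s ≠ [] := by rintro rfl; simp at *
  have ht : t ≠ [] := by rintro rfl; simp at *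
  have hs0 : s.length ≠ 0 := by simpa using hs
  have ht0 : t.length ≠ 0 := by simpa using ht
  replace e2 := e2.resolve_left (by omega)
  replace e1' := e1'.resolve_left (by omega)
  rw [List.isChain_append, List.isChain_cons, List.isChain_append, List.isChain_cons] at hch
  obtain ⟨c1, ⟨c2, c3, ⟨c4, c5⟩, c6⟩, c7⟩ := hch
  obtain ⟨s1, hs1⟩ : ∃ a, s.head? = some a := by
    rcases s with _ | ⟨a, s⟩
    · simp at hs
    · exact ⟨a, rfl⟩
  obtain ⟨m1, hm1⟩ : ∃ a, m.head? = some a := by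
    rcases m with _ | ⟨a, s⟩
    · simp at hm
    · exact ⟨a, rfl⟩
  obtain ⟨m2, hm2⟩ : ∃ a, m.getLast? = some a := ⟨_, List.getLast?_eq_some_getLast hm⟩
  obtain ⟨t2, ht2⟩ : ∃ a, t.getLast? = some a := ⟨_, List.getLast?_eq_some_getLast ht⟩
  obtain ⟨t1, ht1⟩ : ∃ a, t.head? = some a := by
    rcases t with _ | ⟨a, s⟩
    · simp at ht
    · exact ⟨a, rfl⟩
  obtain ⟨s2, hs2⟩ : ∃ a, s.getLast? = some a := ⟨_, List.getLast?_eq_some_getLast hs⟩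
  have f1 : G.Adj m1 t2 := e2 m1 (by simp [hm1]) t2 (by simp [List.getLast?_cons, ht2])
  have f2 : G.Adj s1 m2 := e1' s1 (by simp [hs1]) m2 (by simp [List.getLast?_cons, hm2])
  refine no_merge hD hc hp hne (end_cyc (hD.1.2.2 c hc) hcl hx)
    ⟨s.reverse ++ (m.reverse ++ (t.reverse ++ [y'])), ?_, ?_⟩ hxy
  · rw [← hst]
    classical
    rw [List.perm_iff_count]
    intro a
    simp only [List.count_cons, List.count_append, List.count_reverse, List.count_nil]
    omega
  · have g1 : G.Adj s2 y := c7 s2 (by simp [hs2]) y (by simp)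
    have g2 : G.Adj y' t1 := c4 t1 (by simp [ht1])
    rw [List.isChain_cons, List.isChain_append, List.isChain_append, List.isChain_append]
    refine ⟨?_, reverse_chain c1, ⟨reverse_chain c3, ⟨reverse_chain c5, by simp, ?_⟩, ?_⟩, ?_⟩
    · simp [hs2, g1.symm]
    · simp [ht1, g2.symm]
    · simp [hm1, ht2, f1]
    · simp [hs1, hm2, f2]

theorem third [Fintype V] (hG : IsCubic G) (w a b : V) : ∃ v, G.Adj w v ∧ v ≠ a ∧ v ≠ b := by
  by_contra h
  have h3 := hG w
  rw [Nat.card_coe_set_eq] at h3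
  have : G.neighborSet w ⊆ {a, b} := by
    intro v hv
    by_contra hh
    simp at hh
    exact h ⟨v, hv, hh.1, hh.2⟩
  have := Set.ncard_le_ncard this (Set.toFinite _)
  have h4 := Set.ncard_insert_le a {b}
  rw [Set.ncard_singleton] at h4
  omega

theorem four [Fintype V] (hG : IsCubic G) {w a b c d : V} (ha : G.Adj w a) (hb : G.Adj w b)
    (hc : G.Adj w c) (hd : G.Adj w d) (h : [a, b, c, d].Nodup) : False := by
  classical
  have h3 := hG w
  rw [Nat.card_coe_set_eq] at h3
  have hs : (([a, b, c, d].toFinset : Finset V) : Set V) ⊆ G.neighborSet w := by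
    intro v hv
    simp at hv
    rcases hv with rfl | rfl | rfl | rfl <;> assumption
  have := Set.ncard_le_ncard hs (Set.toFinite _)
  rw [Set.ncard_coe_finset, List.toFinset_card_of_nodup h] at this
  simp at this
  omega

def Out (G : SimpleGraph V) (c : Piece V) (x : V) : Prop := ∃ y, G.Adj x y ∧ y ∉ c.l

theorem out_step [Fintype V] (hG : IsCubic G) (hD : MinD G D) {c : Piece V} (hc : c ∈ D)
    (hcl : c.cl = true) (hodd : c.l.length % 2 = 1) {x w : V} {t : List V}
    (h : Cyc G c (x :: (t ++ [w]))) (hx : Out G c x) : Out G c w := by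
  by_contra hw
  have hw' : ∀ y, G.Adj w y → y ∈ c.l := by
    intro y hy
    by_contra hh
    exact hw ⟨y, hy, hh⟩
  obtain ⟨o, hxo, ho⟩ := hx
  obtain ⟨h1, h2, h3⟩ := h
  have hnd : (x :: (t ++ [w])).Nodup := h1.nodup_iff.2 (piece_nodup hD.1 hc)
  have hwx : G.Adj w x := h3 x (by simp) w (by simp [List.getLast?_cons])
  have hlen := h1.length_eq
  have ht : t ≠ [] := by
    rintro rfl
    simp at hlen
    omega
  obtain ⟨u, hu⟩ : ∃ a, t.getLast? = some a := ⟨_, List.getLast?_eq_some_getLast ht⟩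
  obtain ⟨v, hwv, hvx, hvu⟩ := third hG w x u
  have hvt : v ∈ t := by
    have := h1.mem_iff.2 (hw' v hwv)
    simp only [List.mem_cons, List.mem_append, List.not_mem_nil, or_false] at this
    rcases this with h | h | h
    · exact absurd h hvx
    · exact h
    · exact absurd h hwv.ne'
  obtain ⟨a, b, rfl⟩ := List.append_of_mem hvt
  rcases b with _ | ⟨z, b⟩
  · simp at hu; exact hvu hu
  have e0 : x :: (a ++ v :: z :: b ++ [w]) = (x :: (a ++ [v])) ++ ((z :: b) ++ [w]) := by simp
  rw [e0, List.isChain_append, List.isChain_append] at h2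
  obtain ⟨c1, ⟨c2, -, c3⟩, c4⟩ := h2
  have hnew : (x :: (a ++ [v])) ++ (w :: (z :: b).reverse) = (x :: (a ++ v :: w :: b.reverse)) ++ [z] := by
    simp
  have hok : POK G ⟨(x :: (a ++ [v])) ++ (w :: (z :: b).reverse), false⟩ := by
    refine ⟨?_, by simp; omega, by simp, ?_⟩
    · rw [List.isChain_append, List.isChain_cons (x := w)]
      refine ⟨c1, ⟨?_, reverse_chain c2⟩, ?_⟩
      · intro y hy
        rw [List.head?_reverse] at hy
        exact (c3 y hy w (by simp)).symm
      · simp [List.getLast?_cons, hwv.symm]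
    · intro _ _ a' ha' b' hb' hab
      simp at ha'
      simp only at hb'
      rw [hnew, List.getLast?_append] at hb'
      simp only [List.getLast?_singleton, Option.some_or, Option.mem_def, Option.some.injEq] at hb'
      subst ha' hb'
      obtain ⟨k, hk⟩ : ∃ k, (a ++ [v]).head? = some k := by
        rcases a with _ | ⟨k, a⟩
        · exact ⟨v, rfl⟩
        · exact ⟨k, rfl⟩
      have hkm : k ∈ a ++ [v] := List.mem_of_mem_head? hk
      have hxk : G.Adj x k := by
        rw [List.isChain_cons] at c1
        exact c1.1 k hk
      have hom : o ∉ x :: (a ++ v :: z :: b ++ [w]) := fun h => ho (h1.mem_iff.1 h)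
      apply four hG hwx.symm hxk hxo hab
      clear hlen h1 h3 c1 c2 c3 c4 hw hw' hnew
      simp only [List.nodup_cons, List.nodup_append, List.mem_cons, List.mem_append,
        List.not_mem_nil, or_false, not_or] at *
      grind
  obtain ⟨R, hR⟩ := split_one hc
  have := (replace hD hR (N := [⟨(x :: (a ++ [v])) ++ (w :: (z :: b).reverse), false⟩])
    (by
      simp only [flat, List.flatMap_cons, List.flatMap_nil, List.append_nil]
      refine List.Perm.trans ?_ h1
      classical
      rw [List.perm_iff_count]
      intro a
      simp only [List.count_cons, List.count_append, List.count_reverse, List.count_nil]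
      omega) (by
      intro q hq
      rw [List.mem_singleton] at hq
      rw [hq]; exact hok)).2 (by simp)
  simp [isOC, hcl, hodd] at this

theorem out_all [Fintype V] (hG : IsCubic G) (hD : MinD G D) {c : Piece V} (hc : c ∈ D)
    (hcl : c.cl = true) (hodd : c.l.length % 2 = 1) (t : List V) : ∀ (x : V) (s : List V),
    Cyc G c (x :: (s ++ t)) → Out G c x → ∀ z ∈ t, Out G c z := by
  induction t using List.reverseRecOn with
  | nil => simp
  | append_singleton t w ih =>
    intro x s h hx z hz
    have e : x :: (s ++ (t ++ [w])) = x :: ((s ++ t) ++ [w]) := by simp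
    rw [e] at h
    have hw := out_step hG hD hc hcl hodd h hx
    rcases List.mem_append.1 hz with hz | hz
    · refine ih w (x :: s) ?_ hw z hz
      exact cyc_rot (s := x :: (s ++ t)) (t := [w]) h
    · simp at hz; rw [hz]; exact hw

theorem exists_out [Fintype V] (hG : IsCubic G) {c : Piece V} (hn : c.l.Nodup)
    (hodd : c.l.length % 2 = 1) : ∃ x ∈ c.l, Out G c x := by
  classical
  by_contra h
  have h' : ∀ x ∈ c.l, ∀ y, G.Adj x y → y ∈ c.l := by
    intro x hx y hxy
    by_contra hy
    exact h ⟨x, hx, y, hxy, hy⟩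
  let S : Set V := {v | v ∈ c.l}
  have hdeg : ∀ v : S, (G.induce S).degree v = 3 := by
    intro v
    rw [← hG v, ← SimpleGraph.card_neighborSet_eq_degree, ← Nat.card_eq_fintype_card]
    refine Nat.card_congr ⟨fun u => ⟨u.1.1, u.2⟩, fun u => ⟨⟨u.1, h' v.1 v.2 _ u.2⟩, u.2⟩, ?_, ?_⟩
    · intro u; rfl
    · intro u; rfl
  have hsum := (G.induce S).sum_degrees_eq_twice_card_edges
  simp only [hdeg, Finset.sum_const, Finset.card_univ, smul_eq_mul] at hsum
  have : Fintype.card S = c.l.length := by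
    rw [← List.toFinset_card_of_nodup hn]
    apply Fintype.card_of_finset'
    simp [S]
  omega

theorem all_out [Fintype V] (hG : IsCubic G) (hD : MinD G D) {c : Piece V} (hc : c ∈ D)
    (hcl : c.cl = true) (hodd : c.l.length % 2 = 1) : ∀ x ∈ c.l, Out G c x := by
  obtain ⟨a, ha, hao⟩ := exists_out hG (piece_nodup hD.1 hc) hodd
  obtain ⟨m, hm⟩ := cyc_head (hD.1.2.2 c hc) hcl ha
  intro x hx
  have := hm.1.mem_iff.2 hx
  rcases List.mem_cons.1 this with rfl | h
  · exact hao
  · exact out_all hG hD hc hcl hodd m a [] hm hao x h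

theorem attach [Fintype V] (hG : IsCubic G) (hD : MinD G D) {c : Piece V} (hc : c ∈ D)
    (hcl : c.cl = true) (hodd : c.l.length % 2 = 1) {x : V} (hx : x ∈ c.l) :
    ∃ p ∈ D, isOP p = true ∧ ∃ y ∈ p.l, G.Adj x y ∧ y ∉ c.l := by
  obtain ⟨y, hxy, hy⟩ := all_out hG hD hc hcl hodd x hx
  have := hD.1.2.1 y
  obtain ⟨p, hp, hyp⟩ := List.mem_flatMap.1 this
  obtain ⟨s, t, e⟩ := List.append_of_mem hyp
  obtain ⟨-, h1, h2, -⟩ := key_full hD hc hp hcl hodd hx hxy hy e.symm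
  refine ⟨p, hp, ?_, y, hyp, hxy, hy⟩
  simp [isOP, h1, e]
  omega

theorem attach_inj [Fintype V] (hG : IsCubic G) (hD : MinD G D) {c c' p : Piece V} (hc : c ∈ D)
    (hc' : c' ∈ D) (hp : p ∈ D)
    (hcl : c.cl = true) (hodd : c.l.length % 2 = 1) {x y : V} (hx : x ∈ c.l)
    (hxy : G.Adj x y) (hyc : y ∉ c.l) (hyp : y ∈ p.l)
    (hcl' : c'.cl = true) (hodd' : c'.l.length % 2 = 1) {x' y' : V} (hx' : x' ∈ c'.l)
    (hxy' : G.Adj x' y') (hyc' : y' ∉ c'.l) (hyp' : y' ∈ p.l) : x = x' := by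
  by_contra hne
  obtain ⟨s, t, e⟩ := List.append_of_mem hyp
  obtain ⟨hpc, -, ⟨l1, l2⟩, -⟩ := key_full hD hc hp hcl hodd hx hxy hyc e.symm
  have hpc' : p ≠ c' := by rintro rfl; exact hyc' hyp'
  by_cases hy : y = y'
  · subst hy
    have hs : s ≠ [] := by rintro rfl; simp at l1
    have ht : t ≠ [] := by rintro rfl; simp at l2
    obtain ⟨t1, t', rfl⟩ := List.exists_cons_of_ne_nil ht
    obtain ⟨s', s1, rfl⟩ := (List.eq_nil_or_concat' s).resolve_left hs
    have hnd := piece_nodup hD.1 hp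
    have hch := (hD.1.2.2 p hp).1
    have hxp := piece_disj hD.1 hc hp hpc hx
    have hxp' := piece_disj hD.1 hc' hp hpc' hx'
    rw [e] at hnd hch hxp hxp'
    rw [List.isChain_append, List.isChain_cons] at hch
    have a1 : G.Adj s1 y := hch.2.2 s1 (by simp) y (by simp)
    have a2 : G.Adj y t1 := hch.2.1.1 t1 (by simp)
    apply four hG a1.symm a2 hxy.symm hxy'.symm
    clear hch e
    simp only [List.nodup_cons, List.nodup_append, List.mem_cons, List.mem_append,
        List.not_mem_nil, or_false, not_or] at *
    grind
  · rw [e] at hyp'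
    rcases List.mem_append.1 hyp' with h | h
    · obtain ⟨s1, s2, rfl⟩ := List.append_of_mem h
      exact two_attach hD hc' hc hp hcl' hodd' hx' hxy' hyc' hcl hodd hx hxy hyc
        (s := s1) (m := s2) (t := t) (by rw [e]; simp)
    · rcases List.mem_cons.1 h with h | h
      · exact hy h.symm
      · obtain ⟨s1, s2, rfl⟩ := List.append_of_mem h
        exact two_attach hD hc hc' hp hcl hodd hx hxy hyc hcl' hodd' hx' hxy' hyc'
          (s := s) (m := s1) (t := s2) (by rw [e])

theorem three_mul (L : List (Piece V)) (h : ∀ q ∈ L, 3 ≤ q.l.length) :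
    3 * L.length ≤ (flat L).length := by
  induction L with
  | nil => simp
  | cons q L ih =>
    have h1 := ih (fun q hq => h q (List.mem_cons_of_mem _ hq))
    have h2 := h q (by simp)
    simp only [flat, List.flatMap_cons, List.length_append, List.length_cons] at *
    omega

theorem core [Fintype V] (hG : IsCubic G) (hD : MinD G D) :
    3 * D.countP isOC ≤ D.countP isOP := by
  classical
  have hoc : ∀ q : Piece V, isOC q = true ↔ q.cl = true ∧ q.l.length % 2 = 1 := by
    simp [isOC]
  set L := D.filter isOC with hL
  have hLm : ∀ q, q ∈ L ↔ q ∈ D ∧ q.cl = true ∧ q.l.length % 2 = 1 := by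
    intro q; rw [hL, List.mem_filter, hoc]
  have h1 := three_mul L (fun q hq => by
    obtain ⟨h1, h2, h3⟩ := (hLm q).1 hq
    exact ((hD.1.2.2 q h1).2.2.1 h2).1)
  have hnd : (flat L).Nodup := by
    refine List.Nodup.sublist ?_ hD.1.1
    exact List.Sublist.flatMap (List.filter_sublist) _
  have hx : ∀ x ∈ flat L, ∃ p ∈ D, isOP p = true ∧ ∃ c ∈ L, x ∈ c.l ∧
      ∃ y ∈ p.l, G.Adj x y ∧ y ∉ c.l := by
    intro x hx
    obtain ⟨c, hc, hxc⟩ := List.mem_flatMap.1 hx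
    obtain ⟨a1, a2, a3⟩ := (hLm c).1 hc
    obtain ⟨p, hp, hpo, y, hy⟩ := attach hG hD a1 a2 a3 hxc
    exact ⟨p, hp, hpo, c, hc, hxc, y, hy⟩
  have hne : Nonempty (Piece V) := ⟨⟨[], false⟩⟩
  choose! f hf1 hf2 c hc1 hc2 y hy1 hy2 hy3 using hx
  have hcard : (flat L).toFinset.card ≤ (D.filter isOP).toFinset.card := by
    apply Finset.card_le_card_of_injOn f
    · intro x hx
      have hx : x ∈ flat L := by simpa using hx
      simp [hf1 x hx, hf2 x hx]
    · intro x hx x' hx' he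
      have hx : x ∈ flat L := by simpa using hx
      have hx' : x' ∈ flat L := by simpa using hx'
      obtain ⟨a1, a2, a3⟩ := (hLm _).1 (hc1 x hx)
      obtain ⟨b1, b2, b3⟩ := (hLm _).1 (hc1 x' hx')
      exact attach_inj hG hD a1 b1 (hf1 x hx) a2 a3 (hc2 x hx) (hy2 x hx) (hy3 x hx) (hy1 x hx)
        b2 b3 (hc2 x' hx') (hy2 x' hx') (hy3 x' hx') (he ▸ hy1 x' hx')
  rw [List.toFinset_card_of_nodup hnd] at hcard
  have := List.toFinset_card_le (D.filter isOP)
  rw [List.countP_eq_length_filter, List.countP_eq_length_filter, ← hL]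
  omega


def stp (q : Piece V) (u v : V) : Prop :=
  (∃ i, q.l[i]? = some u ∧ q.l[i+1]? = some v) ∨
    (q.cl = true ∧ q.l[q.l.length - 1]? = some u ∧ q.l[0]? = some v)

def padj (q : Piece V) (u v : V) : Prop := stp q u v ∨ stp q v u

theorem idx_inj {l : List V} (hn : l.Nodup) {i j : ℕ} {a : V} (hi : l[i]? = some a)
    (hj : l[j]? = some a) : i = j := by
  obtain ⟨h1, e1⟩ := List.getElem?_eq_some_iff.1 hi
  obtain ⟨h2, e2⟩ := List.getElem?_eq_some_iff.1 hj
  exact (hn.getElem_inj_iff).1 (e1.trans e2.symm)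

theorem padj_mem {q : Piece V} {u v : V} (h : padj q u v) : u ∈ q.l ∧ v ∈ q.l := by
  rcases h with (⟨i, h1, h2⟩ | ⟨_, h1, h2⟩) | (⟨i, h1, h2⟩ | ⟨_, h1, h2⟩) <;>
    exact ⟨List.mem_of_getElem? (by assumption), List.mem_of_getElem? (by assumption)⟩

theorem nb_iff {q : Piece V} (hn : q.l.Nodup) {i : ℕ} {v : V} (hv : q.l[i]? = some v) (u : V) :
    padj q v u ↔ q.l[i+1]? = some u ∨ (1 ≤ i ∧ q.l[i-1]? = some u) ∨
      (q.cl = true ∧ i + 1 = q.l.length ∧ q.l[0]? = some u) ∨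
      (q.cl = true ∧ i = 0 ∧ q.l[q.l.length - 1]? = some u) := by
  obtain ⟨hi, -⟩ := List.getElem?_eq_some_iff.1 hv
  constructor
  · rintro ((⟨j, h1, h2⟩ | ⟨h0, h1, h2⟩) | (⟨j, h1, h2⟩ | ⟨h0, h1, h2⟩))
    · rw [idx_inj hn h1 hv] at h2; exact Or.inl h2
    · have := idx_inj hn h1 hv
      exact Or.inr (Or.inr (Or.inl ⟨h0, by omega, h2⟩))
    · have := idx_inj hn h2 hv
      subst this
      exact Or.inr (Or.inl ⟨by omega, h1⟩)
    · have := idx_inj hn h2 hv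
      exact Or.inr (Or.inr (Or.inr ⟨h0, by omega, h1⟩))
  · rintro (h | ⟨h1, h⟩ | ⟨h0, h1, h⟩ | ⟨h0, h1, h⟩)
    · exact Or.inl (Or.inl ⟨i, hv, h⟩)
    · refine Or.inr (Or.inl ⟨i-1, h, ?_⟩)
      rw [Nat.sub_add_cancel h1]; exact hv
    · refine Or.inl (Or.inr ⟨h0, ?_, h⟩)
      rw [← h1]; exact hv
    · subst h1
      exact Or.inr (Or.inr ⟨h0, h, hv⟩)

theorem ncard_two {S : Set V} {l : List V} (hn : l.Nodup) {i j : ℕ} (hi : i < l.length)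
    (hj : j < l.length) (hij : i ≠ j) (h : ∀ u, u ∈ S ↔ l[i]? = some u ∨ l[j]? = some u) :
    S.ncard = 2 := by
  have : S = {l[i], l[j]} := by
    ext u
    rw [h]
    simp [List.getElem?_eq_getElem hi, List.getElem?_eq_getElem hj, eq_comm]
  rw [this, Set.ncard_pair]
  intro he
  exact hij (hn.getElem_inj_iff.1 he)

theorem ncard_one {S : Set V} {l : List V} {i : ℕ} (hi : i < l.length)
    (h : ∀ u, u ∈ S ↔ l[i]? = some u) : S.ncard = 1 := by
  have : S = {l[i]} := by
    ext u
    rw [h]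
    simp [List.getElem?_eq_getElem hi, eq_comm]
  rw [this, Set.ncard_singleton]

theorem deg_closed {q : Piece V} (hn : q.l.Nodup) (hl : 3 ≤ q.l.length) (hcl : q.cl = true)
    {v : V} (hv : v ∈ q.l) : {u | padj q v u}.ncard = 2 := by
  obtain ⟨i, hi, e⟩ := List.getElem_of_mem hv
  have hvi : q.l[i]? = some v := by rw [List.getElem?_eq_getElem hi, e]
  by_cases h0 : i = 0
  · apply ncard_two hn (i := 1) (j := q.l.length - 1) (by omega) (by omega) (by omega)
    intro u
    simp only [Set.mem_ofPred_eq]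
    rw [nb_iff hn hvi]
    subst h0
    have : (0:ℕ) + 1 ≠ q.l.length := by omega
    simp only [hcl, this, true_and, false_and, false_or, Nat.le_zero, one_ne_zero, zero_add]
  · by_cases h1 : i + 1 = q.l.length
    · apply ncard_two hn (i := i - 1) (j := 0) (by omega) (by omega) (by omega)
      intro u
      simp only [Set.mem_ofPred_eq]
      rw [nb_iff hn hvi, List.getElem?_eq_none (by omega : q.l.length ≤ i + 1)]
      simp [hcl, h0, h1, Nat.one_le_iff_ne_zero]
    · apply ncard_two hn (i := i - 1) (j := i + 1) (by omega) (by omega) (by omega)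
      intro u
      simp only [Set.mem_ofPred_eq]
      rw [nb_iff hn hvi]
      simp [h0, h1, Nat.one_le_iff_ne_zero]
      tauto

theorem deg_end {q : Piece V} (hn : q.l.Nodup) (hl : 2 ≤ q.l.length) (hcl : q.cl = false)
    {i : ℕ} {v : V} (hv : q.l[i]? = some v) (hi : i = 0 ∨ i + 1 = q.l.length) :
    {u | padj q v u}.ncard = 1 := by
  rcases hi with rfl | hi
  · apply ncard_one (l := q.l) (i := 1) (by omega)
    intro u
    simp only [Set.mem_ofPred_eq]
    rw [nb_iff hn hv]
    simp [hcl]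
  · apply ncard_one (l := q.l) (i := i - 1) (by omega)
    intro u
    simp only [Set.mem_ofPred_eq]
    rw [nb_iff hn hv, List.getElem?_eq_none (by omega : q.l.length ≤ i + 1)]
    simp [hcl]
    omega

theorem deg_int {q : Piece V} (hn : q.l.Nodup)
    {i : ℕ} {v : V} (hv : q.l[i]? = some v) (h0 : i ≠ 0) (h1 : i + 1 < q.l.length) :
    {u | padj q v u}.ncard = 2 := by
  apply ncard_two hn (i := i - 1) (j := i + 1) (by omega) (by omega) (by omega)
  intro u
  simp only [Set.mem_ofPred_eq]
  rw [nb_iff hn hv]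
  have h2 : i + 1 ≠ q.l.length := by omega
  simp only [h0, h2, Nat.one_le_iff_ne_zero, ne_eq, not_false_eq_true, true_and, false_and,
    and_false, or_false]
  tauto

theorem chain_idx {H : SimpleGraph V} {l : List V} (h : l.IsChain H.Adj) {i : ℕ} {u v : V}
    (hu : l[i]? = some u) (hv : l[i+1]? = some v) : H.Adj u v := by
  obtain ⟨h1, e1⟩ := List.getElem?_eq_some_iff.1 hu
  obtain ⟨h2, e2⟩ := List.getElem?_eq_some_iff.1 hv
  have := List.isChain_iff_getElem.1 h i h2
  rwa [e1, e2] at this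

theorem padj_le {q : Piece V} (hq : POK G q) {u v : V} (h : padj q u v) : G.Adj u v := by
  have key : ∀ u v, stp q u v → G.Adj u v := by
    rintro u v (⟨i, h1, h2⟩ | ⟨h0, h1, h2⟩)
    · exact chain_idx hq.1 h1 h2
    · apply (hq.2.2.1 h0).2
      · simpa [List.head?_eq_getElem?] using h2
      · simpa [List.getLast?_eq_getElem?] using h1
  rcases h with h | h
  · exact key _ _ h
  · exact (key _ _ h).symm

def Rep (H : SimpleGraph V) (D : List (Piece V)) : Prop :=
  ∀ u v, H.Adj u v ↔ ∃ q ∈ D, padj q u v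

variable {H : SimpleGraph V}

theorem rep_nb (hD : Good G D) (hR : Rep H D) {q : Piece V} (hq : q ∈ D) {v : V} (hv : v ∈ q.l)
    (u : V) : H.Adj v u ↔ padj q v u := by
  rw [hR]
  constructor
  · rintro ⟨p, hp, h⟩
    by_cases e : p = q
    · rwa [← e]
    · exact absurd (padj_mem h).1 (piece_disj hD hq hp e hv)
  · exact fun h => ⟨q, hq, h⟩

theorem rep_deg (hD : Good G D) (hR : Rep H D) {q : Piece V} (hq : q ∈ D) {v : V} (hv : v ∈ q.l) :
    Nat.card (H.neighborSet v) = {u | padj q v u}.ncard := by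
  rw [Nat.card_coe_set_eq]
  congr 1
  ext u
  exact rep_nb hD hR hq hv u

theorem rep_comp (hD : Good G D) (hR : Rep H D) {q : Piece V} (hq : q ∈ D) :
    ∃ c : H.ConnectedComponent, ∀ v, v ∈ c.supp ↔ v ∈ q.l := by
  have hl := (hD.2.2 q hq).2.1
  have hch : q.l.IsChain H.Adj := by
    rw [List.isChain_iff_getElem]
    intro i hi
    rw [hR]
    exact ⟨q, hq, Or.inl (Or.inl ⟨i, List.getElem?_eq_getElem _, List.getElem?_eq_getElem _⟩)⟩
  have h0 : 0 < q.l.length := by omega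
  refine ⟨H.connectedComponentMk q.l[0], fun v => ?_⟩
  rw [SimpleGraph.ConnectedComponent.mem_supp_iff, SimpleGraph.ConnectedComponent.eq]
  constructor
  · intro h
    replace h := (SimpleGraph.reachable_iff_reflTransGen _ _).1 h.symm
    induction h with
    | refl => exact List.getElem_mem _
    | tail _ h2 ih => exact (padj_mem ((rep_nb hD hR hq ih _).1 h2)).2
  · intro h
    obtain ⟨i, hi, rfl⟩ := List.getElem_of_mem h
    clear h
    induction i with
    | zero => exact SimpleGraph.Reachable.refl _
    | succ i ih =>
      have := List.isChain_iff_getElem.1 hch i hi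
      exact this.symm.reachable.trans (ih (by omega))

theorem ok_ends {q : Piece V} (hq : POK G q) (ho : q.cl = false) (hodd : q.l.length % 2 = 1)
    {i j : ℕ} {u v : V} (hu : q.l[i]? = some u) (hv : q.l[j]? = some v) (hi : i = 0)
    (hj : j + 1 = q.l.length) : ¬ G.Adj u v := by
  apply hq.2.2.2 ho (Nat.odd_iff.2 hodd)
  · subst hi; simpa [List.head?_eq_getElem?] using hu
  · rw [List.getLast?_eq_getElem?, ← hj]; simpa using hv

theorem card_list {α : Type*} {L : List α} (hn : L.Nodup) {p : α → Prop}
    (h : ∀ a, p a ↔ a ∈ L) : Nat.card {a // p a} = L.length := by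
  classical
  rw [← List.toFinset_card_of_nodup hn]
  exact Nat.subtype_card _ (by simp [h])

theorem transfer (hD : Good G D) (hR : Rep H D) :
    IsValidFactor G H ∧ numComponents H = D.length ∧ numOddCycles H = D.countP isOC ∧
    Nat.card {c : H.ConnectedComponent // OddPathComp H c} = D.countP isOP := by
  classical
  have hcomp : ∀ q ∈ D, ∃ c : H.ConnectedComponent, ∀ v, v ∈ c.supp ↔ v ∈ q.l :=
    fun q hq => rep_comp hD hR hq
  have hlen : ∀ q ∈ D, 2 ≤ q.l.length := fun q hq => (hD.2.2 q hq).2.1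
  have hlen3 : ∀ q ∈ D, q.cl = true → 3 ≤ q.l.length := fun q hq h => ((hD.2.2 q hq).2.2.1 h).1
  have hcard : ∀ q ∈ D, ∀ c : H.ConnectedComponent, (∀ v, v ∈ c.supp ↔ v ∈ q.l) →
      Nat.card c.supp = q.l.length := by
    intro q hq c hc
    have : c.supp = ((q.l.toFinset : Finset V) : Set V) := by ext v; simp [← hc v]
    rw [this, Nat.card_coe_set_eq, Set.ncard_coe_finset,
      List.toFinset_card_of_nodup (piece_nodup hD hq)]
  have hsurj : ∀ c : H.ConnectedComponent, ∃ q ∈ D, ∀ v, v ∈ c.supp ↔ v ∈ q.l := by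
    intro c
    obtain ⟨v, hv⟩ := c.nonempty_supp
    obtain ⟨q, hq, hvq⟩ := List.mem_flatMap.1 (hD.2.1 v)
    obtain ⟨c', hc'⟩ := hcomp q hq
    have h1 : v ∈ c'.supp := (hc' v).2 hvq
    have : c = c' := by
      rw [SimpleGraph.ConnectedComponent.mem_supp_iff] at hv h1
      rw [← hv, ← h1]
    exact ⟨q, hq, this ▸ hc'⟩
  have hcyc : ∀ q ∈ D, ∀ c : H.ConnectedComponent, (∀ v, v ∈ c.supp ↔ v ∈ q.l) →
      (OddCycleComp H c ↔ isOC q = true) ∧ (OddPathComp H c ↔ isOP q = true) := by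
    intro q hq c hc
    have hn := piece_nodup hD hq
    have hl := hlen q hq
    unfold OddCycleComp OddPathComp IsCycleComp
    rw [hcard q hq c hc, Nat.odd_iff]
    rcases hcl : q.cl with _ | _
    · have h0 : q.l[0]? = some q.l[0] := List.getElem?_eq_getElem _
      have hm : q.l[0] ∈ q.l := List.getElem_mem _
      have h1 := deg_end hn hl hcl h0 (Or.inl rfl)
      rw [← rep_deg hD hR hq hm] at h1
      constructor
      · simp only [isOC, hcl, Bool.false_and, Bool.false_eq_true, iff_false, not_and]
        intro _ h
        have := h _ ((hc _).2 hm)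
        omega
      · simp only [isOP, hcl, Bool.not_false, Bool.true_and, decide_eq_true_eq, and_iff_left_iff_imp]
        intro _
        exact ⟨_, (hc _).2 hm, h1⟩
    · have h2 : ∀ v ∈ c.supp, Nat.card (H.neighborSet v) = 2 := by
        intro v hv
        rw [hc] at hv
        rw [rep_deg hD hR hq hv]
        exact deg_closed hn (hlen3 q hq hcl) hcl hv
      constructor
      · simp only [isOC, hcl, Bool.true_and, decide_eq_true_eq, and_iff_left_iff_imp]
        intro _
        exact h2
      · simp only [isOP, hcl, Bool.not_true, Bool.false_and, Bool.false_eq_true, iff_false, not_and]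
        rintro _ ⟨v, hv, hv'⟩
        have := h2 v hv
        omega
  have hval : IsValidFactor G H := by
    refine ⟨?_, ?_, ?_⟩
    · intro u v h
      obtain ⟨q, hq, h⟩ := (hR u v).1 h
      exact padj_le (hD.2.2 q hq) h
    · intro v
      obtain ⟨q, hq, hv⟩ := List.mem_flatMap.1 (hD.2.1 v)
      have hn := piece_nodup hD hq
      rw [rep_deg hD hR hq hv]
      rcases hcl : q.cl with _ | _
      · obtain ⟨i, hi, e⟩ := List.getElem_of_mem hv
        have hvi : q.l[i]? = some v := by rw [List.getElem?_eq_getElem hi, e]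
        by_cases h : i = 0 ∨ i + 1 = q.l.length
        · rw [deg_end hn (hlen q hq) hcl hvi h]; simp
        · rw [deg_int hn hvi (by omega) (by omega)]; simp
      · rw [deg_closed hn (hlen3 q hq hcl) hcl hv]; simp
    · intro c hodd u v hu hv huv du dv
      obtain ⟨q, hq, hc⟩ := hsurj c
      have hn := piece_nodup hD hq
      rw [hcard q hq c hc, Nat.odd_iff] at hodd
      rw [hc] at hu hv
      rw [rep_deg hD hR hq hu] at du
      rw [rep_deg hD hR hq hv] at dv
      rcases hcl : q.cl with _ | _
      · obtain ⟨i, hi, e⟩ := List.getElem_of_mem hu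
        have hui : q.l[i]? = some u := by rw [List.getElem?_eq_getElem hi, e]
        obtain ⟨j, hj, e'⟩ := List.getElem_of_mem hv
        have hvj : q.l[j]? = some v := by rw [List.getElem?_eq_getElem hj, e']
        have h1 : i = 0 ∨ i + 1 = q.l.length := by
          by_contra h
          rw [deg_int hn hui (by omega) (by omega)] at du
          omega
        have h2 : j = 0 ∨ j + 1 = q.l.length := by
          by_contra h
          rw [deg_int hn hvj (by omega) (by omega)] at dv
          omega
        have hij : i ≠ j := by
          rintro rfl
          exact huv (e.symm.trans e')
        rcases h1 with h1 | h1
        · exact ok_ends (hD.2.2 q hq) hcl hodd hui hvj h1 (by omega)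
        · intro h
          exact ok_ends (hD.2.2 q hq) hcl hodd hvj hui (by omega) h1 h.symm
      · rw [deg_closed hn (hlen3 q hq hcl) hcl hu] at du
        omega
  refine ⟨hval, ?_⟩
  rcases isEmpty_or_nonempty V with hV | hV
  · have hDn : D = [] := by
      rcases D with _ | ⟨q, D⟩
      · rfl
      · have := hlen q (by simp)
        have h0 : 0 < q.l.length := by omega
        exact (hV.false q.l[0]).elim
    subst hDn
    have : IsEmpty H.ConnectedComponent := ⟨fun c => by
      obtain ⟨v, hv⟩ := c.nonempty_supp
      exact hV.false v⟩
    simp [numComponents, numOddCycles]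
  · have hNe : Nonempty H.ConnectedComponent := hV.map H.connectedComponentMk
    choose! f hf using hcomp
    have hinj : ∀ q ∈ D, ∀ p ∈ D, f q = f p → q = p := by
      intro q hq p hp he
      by_contra hne
      have := hlen q hq
      have hm : q.l[0] ∈ q.l := List.getElem_mem _
      have h2 := (hf q hq _).2 hm
      rw [he, hf p hp] at h2
      exact piece_disj hD hp hq hne h2 hm
    have hfs : ∀ c, ∃ q ∈ D, f q = c := by
      intro c
      obtain ⟨q, hq, hc⟩ := hsurj c
      refine ⟨q, hq, SimpleGraph.ConnectedComponent.supp_injective ?_⟩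
      ext v
      rw [hf q hq, hc]
    have hDnd : D.Nodup := by
      have := hD.1
      unfold flat at this
      rw [List.nodup_flatMap] at this
      refine this.2.imp_of_mem ?_
      intro a b ha hb hab hh
      subst hh
      have := hlen a ha
      have hm : a.l[0] ∈ a.l := List.getElem_mem _
      exact hab hm hm
    have hcount : ∀ (g : Piece V → Bool) (P : H.ConnectedComponent → Prop),
        (∀ q ∈ D, P (f q) ↔ g q = true) → Nat.card {c // P c} = D.countP g := by
      intro g P hg
      rw [List.countP_eq_length_filter, ← List.length_map (f := f)]
      apply card_list
      · refine List.Nodup.map_on ?_ (hDnd.filter _)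
        intro x hx y hy
        exact hinj x (List.mem_of_mem_filter hx) y (List.mem_of_mem_filter hy)
      · intro c
        simp only [List.mem_map, List.mem_filter]
        constructor
        · intro h
          obtain ⟨q, hq, rfl⟩ := hfs c
          exact ⟨q, ⟨hq, (hg q hq).1 h⟩, rfl⟩
        · rintro ⟨q, ⟨hq, h⟩, rfl⟩
          exact (hg q hq).2 h
    refine ⟨?_, ?_, ?_⟩
    · have := hcount (fun _ => true) (fun _ => True) (by simp)
      rw [List.countP_true] at this
      rw [← this, numComponents]
      exact Nat.card_congr (Equiv.subtypeUnivEquiv (fun _ => trivial)).symm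
    · exact hcount _ _ (fun q hq => (hcyc q hq _ (hf q hq)).1)
    · exact hcount _ _ (fun q hq => (hcyc q hq _ (hf q hq)).2)

theorem exists_graph (hD : Good G D) : ∃ H : SimpleGraph V, Rep H D := by
  refine ⟨⟨fun u v => ∃ q ∈ D, padj q u v, ?_, ?_⟩, fun u v => Iff.rfl⟩
  · constructor
    rintro u v ⟨q, hq, h⟩
    exact ⟨q, hq, h.symm⟩
  · constructor
    rintro u ⟨q, hq, h⟩
    exact (padj_le (hD.2.2 q hq) h).ne rfl


theorem exists_max {P : ℕ → Prop} {B a : ℕ} (ha : P a) (hB : ∀ n, P n → n ≤ B) :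
    ∃ n, P n ∧ ∀ m, P m → m ≤ n := by
  classical
  refine ⟨Nat.findGreatest P B, Nat.findGreatest_spec (hB a ha) ha, ?_⟩
  intro m hm
  exact Nat.le_findGreatest (hB m hm) hm

theorem three_nb [Fintype V] (hd : ∀ v, Nat.card (H.neighborSet v) ≤ 2) {w a b u : V}
    (ha : H.Adj w a) (hb : H.Adj w b) (hab : a ≠ b) (hu : H.Adj w u) : u = a ∨ u = b := by
  classical
  by_contra h
  push Not at h
  have h3 := hd w
  rw [Nat.card_coe_set_eq] at h3
  have hs : (({a, b, u} : Finset V) : Set V) ⊆ H.neighborSet w := by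
    intro v hv
    simp at hv
    rcases hv with rfl | rfl | rfl <;> assumption
  have := Set.ncard_le_ncard hs (Set.toFinite _)
  rw [Set.ncard_coe_finset, Finset.card_eq_three.2 ⟨a, b, u, hab, h.1.symm, h.2.symm, rfl⟩] at this
  omega

theorem comp_piece [Fintype V] (hH : IsValidFactor G H) (c : H.ConnectedComponent) :
    ∃ q : Piece V, (∀ v, v ∈ q.l ↔ v ∈ c.supp) ∧ q.l.Nodup ∧ POK G q ∧
      ∀ u ∈ q.l, ∀ v, H.Adj u v ↔ padj q u v := by
  classical
  obtain ⟨hle, hdeg, hnon⟩ := hH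
  have hd : ∀ v, Nat.card (H.neighborSet v) ≤ 2 := fun v => (hdeg v).2
  obtain ⟨v0, hv0⟩ := c.nonempty_supp
  obtain ⟨n, ⟨l, hn, hch, hls, hlen⟩, hmax⟩ :=
    exists_max (P := fun n => ∃ l : List V, l.Nodup ∧ l.IsChain H.Adj ∧ (∀ v ∈ l, v ∈ c.supp) ∧
      l.length = n) (a := 1) (B := Fintype.card V) ⟨[v0], by simp, by simp, by simpa using hv0, rfl⟩
      (by
        rintro n ⟨l, hn, -, -, rfl⟩
        exact hn.length_le_card)
  have hn1 : 1 ≤ n := hmax 1 ⟨[v0], by simp, by simp, by simpa using hv0, rfl⟩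
  have hsupp : ∀ u ∈ c.supp, ∀ v, H.Adj u v → v ∈ c.supp := by
    intro u hu v huv
    rw [SimpleGraph.ConnectedComponent.mem_supp_iff] at *
    rw [← hu]
    exact SimpleGraph.ConnectedComponent.sound huv.symm.reachable
  -- interior vertices
  have h_inner : ∀ i (hi : i < l.length), i ≠ 0 → i + 1 < l.length → ∀ u, H.Adj l[i] u →
      l[i+1]? = some u ∨ l[i-1]? = some u := by
    intro i hi h0 h1 u hu
    have a1 : H.Adj l[i] l[i+1] := List.isChain_iff_getElem.1 hch i h1
    have a2 : H.Adj l[i-1] l[i] := by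
      have := List.isChain_iff_getElem.1 hch (i-1) (by omega)
      have e : i - 1 + 1 = i := by omega
      simpa only [e] using this
    have hne : l[i+1] ≠ l[i-1] := by
      intro h
      have := hn.getElem_inj_iff.1 h
      omega
    rcases three_nb hd a1 a2.symm hne hu with rfl | rfl
    · left; simp
    · right; simp
  have hclosed : ∀ u ∈ l, ∀ v, H.Adj u v → v ∈ l := by
    intro u hu v huv
    obtain ⟨i, hi, rfl⟩ := List.getElem_of_mem hu
    by_contra hv
    by_cases h0 : i = 0
    · subst h0
      have := hmax (n + 1) ⟨v :: l, by simp [hn, hv], ?_, ?_, by simp [hlen]⟩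
      · omega
      · rw [List.isChain_cons]
        refine ⟨?_, hch⟩
        intro y hy
        rw [List.head?_eq_getElem?, List.getElem?_eq_getElem hi] at hy
        simp at hy
        rw [← hy]; exact huv.symm
      · intro w hw
        rcases List.mem_cons.1 hw with rfl | hw
        · exact hsupp _ (hls _ hu) _ huv
        · exact hls w hw
    · by_cases h1 : i + 1 < l.length
      · rcases h_inner i hi h0 h1 v huv with h | h <;> exact hv (List.mem_of_getElem? h)
      · have := hmax (n + 1) ⟨l ++ [v], ?_, ?_, ?_, by simp [hlen]⟩
        · omega
        · rw [List.nodup_append]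
          refine ⟨hn, by simp, ?_⟩
          intro a ha b hb
          simp at hb
          rintro rfl
          rw [hb] at ha
          exact hv ha
        · rw [List.isChain_append]
          refine ⟨hch, by simp, ?_⟩
          intro y hy z hz
          simp at hz
          subst hz
          have e : l.length - 1 = i := by omega
          rw [List.getLast?_eq_getElem?, e, List.getElem?_eq_getElem hi] at hy
          simp at hy
          rw [← hy]; exact huv
        · intro w hw
          rcases List.mem_append.1 hw with hw | hw
          · exact hls w hw
          · simp at hw
            rw [hw]
            exact hsupp _ (hls _ hu) _ huv
  have hmem : ∀ v, v ∈ l ↔ v ∈ c.supp := by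
    intro v
    refine ⟨hls v, fun hv => ?_⟩
    have h0 : 0 < l.length := by omega
    have hz := hls l[0] (List.getElem_mem _)
    rw [SimpleGraph.ConnectedComponent.mem_supp_iff] at hz hv
    rw [← hv, SimpleGraph.ConnectedComponent.eq] at hz
    replace hz := (SimpleGraph.reachable_iff_reflTransGen _ _).1 hz
    clear hv
    induction hz with
    | refl => exact List.getElem_mem _
    | tail _ h2 ih => exact hclosed _ ih _ h2
  have hn2 : 2 ≤ l.length := by
    have h0 : 0 < l.length := by omega
    have h := (hdeg l[0]).1
    have hne : Nonempty (H.neighborSet l[0]) := by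
      by_contra hh
      rw [not_nonempty_iff] at hh
      rw [Nat.card_of_isEmpty] at h
      omega
    obtain ⟨u, hu⟩ := hne
    obtain ⟨j, hj, e⟩ := List.getElem_of_mem (hclosed _ (List.getElem_mem _) u hu)
    by_contra hlt
    have : j = 0 := by omega
    subst this
    have hu' : H.Adj l[0] u := hu
    exact hu'.ne e
  let q : Piece V := ⟨l, decide (3 ≤ l.length ∧ H.Adj (l[l.length-1]'(by omega)) (l[0]'(by omega)))⟩
  have hqcl : q.cl = true ↔ (3 ≤ l.length ∧ H.Adj (l[l.length-1]'(by omega)) (l[0]'(by omega))) := by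
    simp [q]
  have hadj : ∀ u ∈ q.l, ∀ v, H.Adj u v ↔ padj q u v := by
    intro u hu v
    constructor
    · intro huv
      obtain ⟨j, hj, ej⟩ := List.getElem_of_mem (hclosed u hu v huv)
      obtain ⟨i, hi, ei⟩ := List.getElem_of_mem hu
      have hij : i ≠ j := by
        rintro rfl
        exact huv.ne (ei.symm.trans ej)
      have hui : q.l[i]? = some u := by rw [List.getElem?_eq_getElem hi, ei]
      have hvj : q.l[j]? = some v := by rw [List.getElem?_eq_getElem hj, ej]
      change i < l.length at hi
      by_cases h1 : i ≠ 0 ∧ i + 1 < l.length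
      · rw [nb_iff hn hui]
        rcases h_inner i hi h1.1 h1.2 v (by rw [show l[i] = u from ei]; exact huv) with h | h
        · exact Or.inl h
        · exact Or.inr (Or.inl ⟨by omega, h⟩)
      by_cases h2 : j ≠ 0 ∧ j + 1 < l.length
      · refine Or.symm ((nb_iff (q := q) hn hvj u).2 ?_)
        rcases h_inner j hj h2.1 h2.2 u (by rw [ej]; exact huv.symm) with h | h
        · exact Or.inl h
        · exact Or.inr (Or.inl ⟨by omega, h⟩)
      by_cases hl2 : l.length = 2
      · rw [nb_iff hn hui]
        by_cases hi0 : i = 0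
        · left
          have : j = i + 1 := by omega
          rw [← this]; exact hvj
        · right; left
          have : j = i - 1 := by omega
          rw [← this]; exact ⟨by omega, hvj⟩
      · have hcl : q.cl = true := by
          rw [hqcl]
          refine ⟨by omega, ?_⟩
          by_cases hi0 : i = 0
          · have hj' : j = l.length - 1 := by omega
            subst hi0 hj'
            have ei' : l[0] = u := ei
            rw [ei', ej]; exact huv.symm
          · have hi' : i = l.length - 1 := by omega
            have hj' : j = 0 := by omega
            subst hi' hj'
            have ei' : l[l.length - 1] = u := ei
            rw [ei', ej]; exact huv
        rw [nb_iff hn hui]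
        by_cases hi0 : i = 0
        · have hj' : j = l.length - 1 := by omega
          right; right; right
          exact ⟨hcl, hi0, by rw [← hvj, hj']⟩
        · have hi' : i + 1 = l.length := by omega
          have hj' : j = 0 := by omega
          right; right; left
          exact ⟨hcl, hi', by rw [← hvj, hj']⟩
    · intro h
      have key : ∀ u v, stp q u v → H.Adj u v := by
        rintro u v (⟨i, h1, h2⟩ | ⟨h0, h1, h2⟩)
        · exact chain_idx hch h1 h2
        · have := (hqcl.1 h0).2
          obtain ⟨_, e1⟩ := List.getElem?_eq_some_iff.1 h1
          obtain ⟨_, e2⟩ := List.getElem?_eq_some_iff.1 h2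
          rw [← e1, ← e2]
          exact this
      rcases h with h | h
      · exact key _ _ h
      · exact (key _ _ h).symm
  refine ⟨q, hmem, hn, ⟨?_, hn2, ?_, ?_⟩, hadj⟩
  · exact hch.imp (fun _ _ h => hle h)
  · intro h
    obtain ⟨h3, h4⟩ := hqcl.1 h
    refine ⟨h3, ?_⟩
    intro a ha b hb
    rw [List.head?_eq_getElem?] at ha
    rw [List.getLast?_eq_getElem?] at hb
    obtain ⟨_, e1⟩ := List.getElem?_eq_some_iff.1 ha
    obtain ⟨_, e2⟩ := List.getElem?_eq_some_iff.1 hb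
    rw [← e1, ← e2]
    exact hle h4
  · intro hcl hodd a ha b hb
    rw [List.head?_eq_getElem?] at ha
    rw [List.getLast?_eq_getElem?] at hb
    have ham : a ∈ q.l := List.mem_of_getElem? ha
    have hbm : b ∈ q.l := List.mem_of_getElem? hb
    have hdd : ∀ v ∈ q.l, Nat.card (H.neighborSet v) = {u | padj q v u}.ncard := by
      intro v hv
      rw [Nat.card_coe_set_eq]
      congr 1
      ext u
      exact hadj v hv u
    refine hnon c ?_ a b ((hmem a).1 ham) ((hmem b).1 hbm) ?_ ?_ ?_
    · have : c.supp = ((l.toFinset : Finset V) : Set V) := by ext v; simp [hmem v]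
      rw [this, Nat.card_coe_set_eq, Set.ncard_coe_finset, List.toFinset_card_of_nodup hn]
      exact hodd
    · rintro rfl
      have := idx_inj hn ha hb
      change 0 = l.length - 1 at this
      omega
    · rw [hdd a ham]
      exact deg_end hn hn2 hcl ha (Or.inl rfl)
    · rw [hdd b hbm]
      refine deg_end hn hn2 hcl hb (Or.inr ?_)
      change l.length - 1 + 1 = l.length
      omega

theorem exists_rep [Fintype V] (hH : IsValidFactor G H) : ∃ D, Good G D ∧ Rep H D := by
  classical
  choose pc h1 h2 h3 h4 using comp_piece hH
  have : Fintype H.ConnectedComponent := Fintype.ofFinite _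
  have hmem : ∀ q, q ∈ (Finset.univ : Finset H.ConnectedComponent).toList.map pc ↔ ∃ c, pc c = q := by
    simp
  have hself : ∀ v, v ∈ (pc (H.connectedComponentMk v)).l := fun v =>
    (h1 _ v).2 (by rw [SimpleGraph.ConnectedComponent.mem_supp_iff])
  refine ⟨(Finset.univ : Finset H.ConnectedComponent).toList.map pc, ⟨?_, ?_, ?_⟩, ?_⟩
  · unfold flat
    rw [List.flatMap_map, List.nodup_flatMap]
    refine ⟨fun c _ => h2 c, ?_⟩
    refine (Finset.nodup_toList _).imp ?_
    intro a b hab v hv hv'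
    rw [h1, SimpleGraph.ConnectedComponent.mem_supp_iff] at hv hv'
    exact hab (hv.symm.trans hv')
  · intro v
    unfold flat
    rw [List.mem_flatMap]
    exact ⟨_, (hmem _).2 ⟨_, rfl⟩, hself v⟩
  · intro q hq
    obtain ⟨c, rfl⟩ := (hmem q).1 hq
    exact h3 c
  · intro u v
    constructor
    · intro h
      exact ⟨_, (hmem _).2 ⟨_, rfl⟩, (h4 _ u (hself u) v).1 h⟩
    · rintro ⟨q, hq, h⟩
      obtain ⟨c, rfl⟩ := (hmem q).1 hq
      exact (h4 c u (padj_mem h).1 v).2 h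

theorem main [Fintype V] (hG : IsCubic G) (hmin : IsMinValidFactor G H) :
    3 * numOddCycles H ≤ Nat.card {c : H.ConnectedComponent // OddPathComp H c} := by
  obtain ⟨⟨hval, hm1⟩, hm2⟩ := hmin
  obtain ⟨D, hD, hR⟩ := exists_rep hval
  obtain ⟨-, t1, t2, t3⟩ := transfer hD hR
  rw [t2, t3]
  refine core hG ⟨hD, ?_⟩
  intro D' hD'
  obtain ⟨H', hR'⟩ := exists_graph hD'
  obtain ⟨v', t1', t2', -⟩ := transfer hD' hR'
  rw [← t1, ← t1', ← t2, ← t2']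
  exact ⟨hm1 H' v', hm2 H' v'⟩

end VF

/-- The number of odd paths of a minimal valid factor is at least three times
its number of odd cycles. -/
theorem stmt14 {V : Type*} [Fintype V] (G H : SimpleGraph V) (hG : IsCubic G)
    (hmin : IsMinValidFactor G H) :
    3 * numOddCycles H ≤ Nat.card {c : H.ConnectedComponent // OddPathComp H c} := by
  exact VF.main hG hmin
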